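/- Let κ be a probability measure on a measurable space Ω_a, let ι be a finite index set, and for each i ∈ ι let μ_i, ν_i be probability measures on a measurable space Ω_i. Let Y be a finite nonempty type and f : Ω_a × (Π_{i∈ι} Ω_i) → Y a measurable function. Suppose c_A ∈ Y and real numbers p_A ≥ p_B satisfy (κ × ⊗_i μ_i){f = c_A} ≥ p_A and (κ × ⊗_i μ_i){f = c} ≤ p_B for every c ≠ c_A. If there is a real number τ with dTV(μ_i, ν_i) ≤ τ for every i ∈ ι and |ι|·τ < (p_A − p_B)/2, then (κ × ⊗_i ν_i){f = c_A} > (κ × ⊗_i ν_i){f = c} for every c ≠ c_A, so c_A is the unique maximizer over c ∈ Y of c ↦ (κ × ⊗_i ν_i){f = c}. -/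

import Mathlib

open MeasureTheory

/-- Total variation distance between two measures:
`dTV(μ, ν) = sup over measurable sets A of |μ(A) − ν(A)|`. -/
noncomputable def tvDist {Ω : Type*} [MeasurableSpace Ω] (μ ν : Measure Ω) : ℝ :=
  ⨆ A : {s : Set Ω // MeasurableSet s}, |(μ A.1).toReal - (ν A.1).toReal|

/-!
Push-forwards do not increase the total variation distance, and forming the product with a fixed
measure `κ` increases it at most by the factor `κ(Ωa)`. Overwriting the `i`-th coordinate of a
sample from `⨂ μⱼ` by an independent sample from `m` gives a sample from the product with `i`-th
factor `m`, so changing one factor costs at most the distance between the old and the new one.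
Changing the factors one at a time, the total cost is at most `∑ᵢ dTV(μᵢ, νᵢ)`. If each class
probability moves by less than half of the gap `pA - pB`, the winning class stays the same.
-/

section TVDist

variable {Ω Ω' : Type*} [MeasurableSpace Ω] [MeasurableSpace Ω']

theorem tvDist_self (μ : Measure Ω) : tvDist μ μ = 0 := by
  simp [tvDist]

theorem tvDist_le {μ ν : Measure Ω} {r : ℝ}
    (h : ∀ A, MeasurableSet A → |μ.real A - ν.real A| ≤ r) : tvDist μ ν ≤ r :=
  ciSup_le fun A ↦ h A.1 A.2

theorem abs_measureReal_sub_le_tvDist (μ ν : Measure Ω) [IsFiniteMeasure μ] [IsFiniteMeasure ν]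
    {A : Set Ω} (hA : MeasurableSet A) : |μ.real A - ν.real A| ≤ tvDist μ ν := by
  have hbdd : BddAbove (Set.range fun A : {s : Set Ω // MeasurableSet s} ↦
      |μ.real A.1 - ν.real A.1|) := by
    refine ⟨max (μ.real Set.univ) (ν.real Set.univ), ?_⟩
    rintro _ ⟨B, rfl⟩
    exact abs_sub_le_of_nonneg_of_le
      measureReal_nonneg ((measureReal_mono (Set.subset_univ _)).trans (le_max_left _ _))
      measureReal_nonneg ((measureReal_mono (Set.subset_univ _)).trans (le_max_right _ _))
  exact le_ciSup hbdd ⟨A, hA⟩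

theorem tvDist_triangle (μ ν ρ : Measure Ω) [IsFiniteMeasure μ] [IsFiniteMeasure ν]
    [IsFiniteMeasure ρ] : tvDist μ ρ ≤ tvDist μ ν + tvDist ν ρ :=
  tvDist_le fun A hA ↦ calc
    |μ.real A - ρ.real A| ≤ |μ.real A - ν.real A| + |ν.real A - ρ.real A| := abs_sub_le ..
    _ ≤ tvDist μ ν + tvDist ν ρ :=
      add_le_add (abs_measureReal_sub_le_tvDist μ ν hA) (abs_measureReal_sub_le_tvDist ν ρ hA)

theorem tvDist_map_le (μ ν : Measure Ω) [IsFiniteMeasure μ] [IsFiniteMeasure ν] {g : Ω → Ω'}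
    (hg : Measurable g) : tvDist (μ.map g) (ν.map g) ≤ tvDist μ ν := by
  refine tvDist_le fun A hA ↦ ?_
  rw [map_measureReal_apply hg hA, map_measureReal_apply hg hA]
  exact abs_measureReal_sub_le_tvDist μ ν (hg hA)

theorem measureReal_lt_of_tvDist_lt {μ ν : Measure Ω} [IsFiniteMeasure μ] [IsFiniteMeasure ν]
    {A B : Set Ω} (hA : MeasurableSet A) (hB : MeasurableSet B)
    (h : tvDist μ ν < (μ.real A - μ.real B) / 2) : ν.real B < ν.real A := by
  have hμνA := (abs_sub_le_iff.1 (abs_measureReal_sub_le_tvDist μ ν hA)).1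
  have hνμB := (abs_sub_le_iff.1 (abs_measureReal_sub_le_tvDist μ ν hB)).2
  linarith

theorem measureReal_prod_eq_integral (κ : Measure Ω') (μ : Measure Ω) [IsFiniteMeasure μ]
    {E : Set (Ω' × Ω)} (hE : MeasurableSet E) :
    (κ.prod μ).real E = ∫ x, μ.real (Prod.mk x ⁻¹' E) ∂κ := by
  simp only [measureReal_def]
  rw [Measure.prod_apply hE, integral_toReal (measurable_measure_prodMk_left hE).aemeasurable]
  exact .of_forall fun x ↦ measure_lt_top μ _

theorem tvDist_prod_left_le (κ : Measure Ω') (μ ν : Measure Ω) [IsFiniteMeasure κ]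
    [IsFiniteMeasure μ] [IsFiniteMeasure ν] :
    tvDist (κ.prod μ) (κ.prod ν) ≤ κ.real Set.univ * tvDist μ ν := by
  refine tvDist_le fun E hE ↦ ?_
  have integrable_section (ρ : Measure Ω) [IsFiniteMeasure ρ] :
      Integrable (fun x ↦ ρ.real (Prod.mk x ⁻¹' E)) κ :=
    Measure.integrable_measure_prodMk_left hE (measure_ne_top _ _)
  rw [measureReal_prod_eq_integral κ μ hE, measureReal_prod_eq_integral κ ν hE,
    ← integral_sub (integrable_section μ) (integrable_section ν), mul_comm,
    ← Real.norm_eq_abs]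
  exact norm_integral_le_of_norm_le_const <| .of_forall fun x ↦
    abs_measureReal_sub_le_tvDist μ ν (measurable_prodMk_left hE)

end TVDist

section Pi

variable {ι : Type*} [Fintype ι] {Ω : ι → Type*} [∀ i, MeasurableSpace (Ω i)]

theorem pi_update_eq_map_prod [DecidableEq ι] (μ : ∀ i, Measure (Ω i)) [∀ i, SigmaFinite (μ i)]
    (i : ι) [IsProbabilityMeasure (μ i)] (m : Measure (Ω i)) [SigmaFinite m] :
    Measure.pi (Function.update μ i m) =
      ((Measure.pi μ).prod m).map fun p ↦ Function.update p.1 i p.2 := by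
  have : ∀ j, SigmaFinite (Function.update μ i m j) :=
    (Function.forall_update_iff μ fun _ ρ ↦ SigmaFinite ρ).2
      ⟨inferInstance, fun _ _ ↦ inferInstance⟩
  refine Measure.pi_eq fun s hs ↦ ?_
  have preimage_box : (fun p : (∀ j, Ω j) × Ω i ↦ Function.update p.1 i p.2) ⁻¹' Set.univ.pi s =
      Set.univ.pi (Function.update s i Set.univ) ×ˢ s i := by
    ext p
    simp only [Set.mem_preimage, Set.mem_prod, Set.mem_univ_pi,
      Function.forall_update_iff p.1 fun j x ↦ x ∈ s j,
      Function.forall_update_iff s fun j t ↦ p.1 j ∈ t, Set.mem_univ, true_and, and_comm]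
  rw [Measure.map_apply measurable_update' (.univ_pi hs), preimage_box, Measure.prod_prod,
    Measure.pi_pi, ← Finset.prod_erase_mul _ _ (Finset.mem_univ i),
    ← Finset.prod_erase_mul _ _ (Finset.mem_univ i)]
  have prod_erase : ∏ j ∈ Finset.univ.erase i, μ j (Function.update s i Set.univ j) =
      ∏ j ∈ Finset.univ.erase i, Function.update μ i m j (s j) :=
    Finset.prod_congr rfl fun j hj ↦ by simp [Finset.ne_of_mem_erase hj]
  simp only [prod_erase, Function.update_self, measure_univ, mul_one]

theorem tvDist_pi_update_le [DecidableEq ι] (μ : ∀ i, Measure (Ω i))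
    [∀ i, IsProbabilityMeasure (μ i)] (i : ι) (m m' : Measure (Ω i)) [IsFiniteMeasure m]
    [IsFiniteMeasure m'] :
    tvDist (Measure.pi (Function.update μ i m)) (Measure.pi (Function.update μ i m')) ≤
      tvDist m m' := by
  rw [pi_update_eq_map_prod, pi_update_eq_map_prod]
  calc
    _ ≤ tvDist ((Measure.pi μ).prod m) ((Measure.pi μ).prod m') :=
      tvDist_map_le _ _ measurable_update'
    _ ≤ (Measure.pi μ).real Set.univ * tvDist m m' := tvDist_prod_left_le _ m m'
    _ = tvDist m m' := by rw [probReal_univ, one_mul]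

theorem tvDist_pi_piecewise_le_sum [DecidableEq ι] (μ ν : ∀ i, Measure (Ω i))
    [∀ i, IsProbabilityMeasure (μ i)] [∀ i, IsProbabilityMeasure (ν i)] (s : Finset ι) :
    tvDist (Measure.pi μ) (Measure.pi (s.piecewise ν μ)) ≤ ∑ i ∈ s, tvDist (μ i) (ν i) := by
  have isProbabilityMeasure_piecewise (t : Finset ι) (j : ι) :
      IsProbabilityMeasure (t.piecewise ν μ j) :=
    t.piecewise_cases ν μ (fun ρ ↦ IsProbabilityMeasure ρ) inferInstance inferInstance
  induction s using Finset.induction_on with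
  | empty => simp [tvDist_self]
  | insert i s hi ih =>
    have update_self : Function.update (s.piecewise ν μ) i (μ i) = s.piecewise ν μ := by
      simp [Function.update_eq_self_iff, hi]
    have change_factor : tvDist (Measure.pi (s.piecewise ν μ))
        (Measure.pi ((insert i s).piecewise ν μ)) ≤ tvDist (μ i) (ν i) := by
      simpa only [update_self, ← Finset.piecewise_insert] using
        tvDist_pi_update_le (s.piecewise ν μ) i (μ i) (ν i)
    calc
      _ ≤ tvDist (Measure.pi μ) (Measure.pi (s.piecewise ν μ)) +
          tvDist (Measure.pi (s.piecewise ν μ)) (Measure.pi ((insert i s).piecewise ν μ)) :=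
        tvDist_triangle _ _ _
      _ ≤ ∑ j ∈ s, tvDist (μ j) (ν j) + tvDist (μ i) (ν i) := add_le_add ih change_factor
      _ = ∑ j ∈ insert i s, tvDist (μ j) (ν j) := by rw [Finset.sum_insert hi, add_comm]

theorem tvDist_pi_le_sum (μ ν : ∀ i, Measure (Ω i)) [∀ i, IsProbabilityMeasure (μ i)]
    [∀ i, IsProbabilityMeasure (ν i)] :
    tvDist (Measure.pi μ) (Measure.pi ν) ≤ ∑ i, tvDist (μ i) (ν i) := by
  classical simpa using tvDist_pi_piecewise_le_sum μ ν Finset.univ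

end Pi

theorem certified_winning_tickets_full_general
    {Ωa : Type*} [MeasurableSpace Ωa]
    {ι : Type*} [Fintype ι] {Ωb : ι → Type*} [∀ i, MeasurableSpace (Ωb i)]
    {Y : Type*} [MeasurableSpace Y] [MeasurableSingletonClass Y]
    (κ : Measure Ωa) [IsFiniteMeasure κ]
    (μ ν : ∀ i, Measure (Ωb i))
    [∀ i, IsProbabilityMeasure (μ i)] [∀ i, IsProbabilityMeasure (ν i)]
    (f : Ωa × (∀ i, Ωb i) → Y) (hf : Measurable f)
    (cA : Y) (pA pB : ℝ)
    (hA : pA ≤ (κ.prod (Measure.pi μ)).real {ω | f ω = cA})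
    (hB : ∀ c, c ≠ cA → (κ.prod (Measure.pi μ)).real {ω | f ω = c} ≤ pB)
    (hgap : κ.real Set.univ * ∑ i, tvDist (μ i) (ν i) < (pA - pB) / 2) :
    (∀ c, c ≠ cA → (κ.prod (Measure.pi ν)).real {ω | f ω = c} <
        (κ.prod (Measure.pi ν)).real {ω | f ω = cA}) ∧
      ∀ c, (∀ c', (κ.prod (Measure.pi ν)).real {ω | f ω = c'} ≤
        (κ.prod (Measure.pi ν)).real {ω | f ω = c}) → c = cA := by
  have tvDist_lt : tvDist (κ.prod (Measure.pi μ)) (κ.prod (Measure.pi ν)) < (pA - pB) / 2 := calc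
    _ ≤ κ.real Set.univ * tvDist (Measure.pi μ) (Measure.pi ν) := tvDist_prod_left_le κ _ _
    _ ≤ κ.real Set.univ * ∑ i, tvDist (μ i) (ν i) := by gcongr; exact tvDist_pi_le_sum μ ν
    _ < (pA - pB) / 2 := hgap
  have lt_cA (c : Y) (hc : c ≠ cA) : (κ.prod (Measure.pi ν)).real {ω | f ω = c} <
      (κ.prod (Measure.pi ν)).real {ω | f ω = cA} := by
    refine measureReal_lt_of_tvDist_lt (hf (measurableSet_singleton cA))
      (hf (measurableSet_singleton c)) (tvDist_lt.trans_le ?_)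
    linarith [hB c hc]
  exact ⟨lt_cA, fun c hmax ↦ by_contra fun hc ↦ (lt_cA c hc).not_ge (hmax cA)⟩

theorem certified_winning_tickets_full
    {Ωa : Type*} [MeasurableSpace Ωa]
    {ι : Type*} [Fintype ι] {Ωb : ι → Type*} [∀ i, MeasurableSpace (Ωb i)]
    {Y : Type*} [MeasurableSpace Y] [MeasurableSingletonClass Y] [Fintype Y] [Nonempty Y]
    (κ : Measure Ωa) [IsProbabilityMeasure κ]
    (μ ν : ∀ i, Measure (Ωb i))
    [∀ i, IsProbabilityMeasure (μ i)] [∀ i, IsProbabilityMeasure (ν i)]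
    (f : Ωa × (∀ i, Ωb i) → Y) (hf : Measurable f)
    (cA : Y) (pA pB : ℝ) (hpAB : pA ≥ pB)
    (hA : ((κ.prod (Measure.pi μ)) {ω | f ω = cA}).toReal ≥ pA)
    (hB : ∀ c, c ≠ cA → ((κ.prod (Measure.pi μ)) {ω | f ω = c}).toReal ≤ pB)
    (τ : ℝ) (hτ : ∀ i, tvDist (μ i) (ν i) ≤ τ)
    (hcard : (Fintype.card ι : ℝ) * τ < (pA - pB) / 2) :
    (∀ c, c ≠ cA →
        ((κ.prod (Measure.pi ν)) {ω | f ω = cA}).toReal >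
          ((κ.prod (Measure.pi ν)) {ω | f ω = c}).toReal) ∧
      (∀ c : Y,
        (∀ c' : Y,
            ((κ.prod (Measure.pi ν)) {ω | f ω = c'}).toReal ≤
              ((κ.prod (Measure.pi ν)) {ω | f ω = c}).toReal) → c = cA) := by
  refine certified_winning_tickets_full_general κ μ ν f hf cA pA pB hA hB (lt_of_le_of_lt ?_ hcard)
  simpa using Finset.sum_le_card_nsmul Finset.univ _ τ fun i _ ↦ hτ i
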